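/- Let n ≥ 0 be an integer. Then, as the real parameter q tends to 1 from below, the q-Euler numbers tend to the classical Euler numbers: lim_{q→1⁻} E_{n,q} = 2·(1 − 2^{n+1})·bernoulli(n+1)/(n+1). -/

import Mathlib

open Finset Filter

/-- The q-analogue `[x]_q = (1 - q^x)/(1 - q)` with real exponent. -/
noncomputable def qb (q x : ℝ) : ℝ := (1 - q ^ x) / (1 - q)

/-- q-Euler polynomial `E_{n,q}(x) = [2]_q ∑_{k≥0} (-1)^k q^k [k+x]_q^n`. -/
noncomputable def qEulerPoly (q : ℝ) (n : ℕ) (x : ℝ) : ℝ :=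
  (1 + q) * ∑' k : ℕ, (-1 : ℝ) ^ k * q ^ k * qb q ((k : ℝ) + x) ^ n

/-- q-Euler number `E_{n,q} = E_{n,q}(0)`. -/
noncomputable def qEuler (q : ℝ) (n : ℕ) : ℝ := qEulerPoly q n 0

/-- q-Genocchi polynomial `G_{n,q}(x) = n[2]_q ∑_{k≥0} (-1)^k q^{k+x} [k+x]_q^{n-1}`,
with `G_{0,q}(x) = 0` (via the factor `n`). -/
noncomputable def qGenocchiPoly (q : ℝ) (n : ℕ) (x : ℝ) : ℝ :=
  (n : ℝ) * (1 + q) * ∑' k : ℕ, (-1 : ℝ) ^ k * q ^ ((k : ℝ) + x) * qb q ((k : ℝ) + x) ^ (n - 1)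

/-- q-Genocchi number `G_{n,q} = G_{n,q}(0)`. -/
noncomputable def qGenocchi (q : ℝ) (n : ℕ) : ℝ := qGenocchiPoly q n 0

/-- q-Bernoulli number `B_{n,q} = -n ∑_{k≥0} q^k [k]_q^{n-1}` (for `n ≥ 1`). -/
noncomputable def qBernoulli (q : ℝ) (n : ℕ) : ℝ :=
  -(n : ℝ) * ∑' k : ℕ, q ^ k * qb q (k : ℝ) ^ (n - 1)

lemma aux_half (N : ℕ) :
    ∑ m ∈ range (N + 1), (N.choose m : ℝ) * 2 ^ m * (bernoulli m : ℝ)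
      = (2 - 2 ^ N) * (bernoulli N : ℝ) := by
  have h := bernoulliFun_eval_half N
  rw [bernoulliFun, Polynomial.bernoulli, Polynomial.map_sum, Polynomial.eval_finsetSum] at h
  have h2 : ∑ m ∈ range (N + 1), (N.choose m : ℝ) * 2 ^ m * (bernoulli m : ℝ)
      = 2 ^ N * ((2 / 2 ^ N - 1) * (bernoulli N : ℝ)) := by
    rw [← h, Finset.mul_sum]
    refine Finset.sum_congr rfl fun m hm => ?_
    have hm' : m ≤ N := Nat.lt_succ_iff.mp (Finset.mem_range.mp hm)
    simp only [Polynomial.map_monomial, Polynomial.eval_monomial]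
    obtain ⟨d, rfl⟩ := Nat.exists_eq_add_of_le hm'
    have : (2:ℝ) ^ d * (2⁻¹) ^ d = 1 := by rw [← mul_pow]; norm_num
    simp only [Nat.add_sub_cancel_left, pow_add, eq_ratCast, Rat.cast_mul, Rat.cast_natCast]
    linear_combination (-(2:ℝ) ^ m * (bernoulli m : ℝ) * ((m + d).choose m : ℝ)) * this
  rw [h2]
  have : (2:ℝ) ^ N ≠ 0 := by positivity
  field_simp

lemma aux_one (N : ℕ) :
    ∑ m ∈ range (N + 1), (N.choose m : ℝ) * (bernoulli m : ℝ)
      = (bernoulli N : ℝ) + if N = 1 then 1 else 0 := by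
  have h := sum_bernoulli N
  rw [Finset.sum_range_succ]
  have h' := congrArg (fun x : ℚ => (x : ℝ)) h
  simp only [Rat.cast_sum, Rat.cast_mul, Rat.cast_natCast] at h'
  rw [h']
  split_ifs <;> simp [add_comm]

/-- the limiting values -/
noncomputable def eLim (n : ℕ) : ℝ := 2 * (1 - 2 ^ (n + 1)) * (bernoulli (n + 1) : ℝ) / (n + 1)

lemma eLim_rec (n : ℕ) :
    2 * eLim n = 2 * 0 ^ n - ∑ j ∈ range n, (n.choose j : ℝ) * eLim j := by
  have key : ∑ j ∈ range (n + 1), (n.choose j : ℝ) * eLim j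
      = 2 / (n + 1) * ∑ m ∈ range (n + 2), ((n + 1).choose m : ℝ) * (1 - 2 ^ m) * bernoulli m := by
    rw [Finset.sum_range_succ' _ (n + 1), mul_add, Finset.mul_sum]
    simp only [pow_zero, sub_self, mul_zero, zero_mul, add_zero]
    refine Finset.sum_congr rfl fun j _ => ?_
    have h : ((n : ℝ) + 1) * (n.choose j : ℝ) = ((n + 1).choose (j + 1) : ℝ) * (j + 1) := by
      exact_mod_cast Nat.add_one_mul_choose_eq n j
    have h1 : (n : ℝ) + 1 ≠ 0 := by positivity
    have h2 : (j : ℝ) + 1 ≠ 0 := by positivity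
    unfold eLim
    field_simp
    linear_combination (1 - (2:ℝ) ^ (j + 1)) * (bernoulli (j + 1) : ℝ) * h
  have hs : ∑ m ∈ range (n + 2), ((n + 1).choose m : ℝ) * (1 - 2 ^ m) * bernoulli m
      = (bernoulli (n + 1) : ℝ) + (if n + 1 = 1 then 1 else 0)
        - (2 - 2 ^ (n + 1)) * (bernoulli (n + 1) : ℝ) := by
    rw [← aux_one, ← aux_half, ← Finset.sum_sub_distrib]
    exact Finset.sum_congr rfl fun m _ => by ring
  rw [hs, Finset.sum_range_succ, Nat.choose_self] at key
  have h0 : eLim n = 2 * (1 - 2 ^ (n + 1)) * (bernoulli (n + 1) : ℝ) / (n + 1) := rfl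
  have h1 : (n : ℝ) + 1 ≠ 0 := by positivity
  rcases n with _ | n
  · simp [eLim]; norm_num
  · rw [if_neg (by omega)] at key
    rw [zero_pow (by omega)]
    rw [eq_sub_of_add_eq key, h0]
    field_simp
    push_cast
    ring

/-- the alternating series -/
noncomputable def qS (q : ℝ) (n : ℕ) : ℝ :=
  ∑' k : ℕ, (-1 : ℝ) ^ k * q ^ k * ((1 - q ^ k) / (1 - q)) ^ n

lemma qEuler_eq (q : ℝ) (n : ℕ) : qEuler q n = (1 + q) * qS q n := by
  simp [qEuler, qEulerPoly, qS, qb]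

lemma qS_summable {q : ℝ} (h0 : 0 < q) (h1 : q < 1) (n : ℕ) :
    Summable fun k : ℕ => (-1 : ℝ) ^ k * q ^ k * ((1 - q ^ k) / (1 - q)) ^ n := by
  refine Summable.of_norm_bounded
    ((summable_geometric_of_lt_one h0.le h1).mul_right ((1 / (1 - q)) ^ n)) fun k => ?_
  have hk : q ^ k ≤ 1 := pow_le_one₀ h0.le h1.le
  have hk0 : 0 < q ^ k := pow_pos h0 k
  have hq : 0 < 1 - q := by linarith
  rw [norm_mul, norm_mul, norm_pow, norm_pow, norm_pow, norm_neg, norm_one, one_pow, one_mul,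
    Real.norm_of_nonneg h0.le,
    Real.norm_of_nonneg (div_nonneg (by linarith) hq.le)]
  have : 0 ≤ 1 - q ^ k := by linarith
  gcongr
  linarith

lemma qS_rec {q : ℝ} (h0 : 0 < q) (h1 : q < 1) (n : ℕ) :
    qS q n = (0 ^ n - q * ∑ j ∈ range n, (n.choose j : ℝ) * q ^ j * qS q j)
      / (1 + q ^ (n + 1)) := by
  have hq : 1 - q ≠ 0 := by linarith
  have h : qS q n = 0 ^ n - q * ∑ j ∈ range (n + 1), (n.choose j : ℝ) * q ^ j * qS q j := by
    conv_lhs => rw [qS, (qS_summable h0 h1 n).tsum_eq_zero_add]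
    simp only [qS, ← tsum_mul_left]
    rw [← Summable.tsum_finsetSum
      (fun j _ => (qS_summable h0 h1 j).mul_left _), ← tsum_mul_left, sub_eq_add_neg (0 ^ n : ℝ), ← tsum_neg]
    congr 1
    · simp
    · refine tsum_congr fun k => ?_
      have e : (1 - q ^ (k + 1)) / (1 - q) = q * ((1 - q ^ k) / (1 - q)) + 1 := by
        field_simp; ring
      rw [e, add_pow, Finset.mul_sum, Finset.mul_sum, ← Finset.sum_neg_distrib]
      refine Finset.sum_congr rfl fun j _ => ?_
      rw [mul_pow]
      ring
  have hp : 1 + q ^ (n + 1) ≠ 0 := by positivity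
  rw [Finset.sum_range_succ, Nat.choose_self] at h
  rw [eq_div_iff hp]
  push_cast at h
  linear_combination h

lemma qS_tendsto (n : ℕ) :
    Tendsto (fun q : ℝ => qS q n) (nhdsWithin 1 (Set.Ioo 0 1)) (nhds (eLim n / 2)) := by
  induction n using Nat.strong_induction_on with
  | _ n ih =>
    have hid : Tendsto (fun q : ℝ => q) (nhdsWithin 1 (Set.Ioo 0 1)) (nhds 1) :=
      tendsto_nhdsWithin_of_tendsto_nhds tendsto_id
    have hsum : Tendsto (fun q : ℝ => ∑ j ∈ range n, (n.choose j : ℝ) * q ^ j * qS q j)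
        (nhdsWithin 1 (Set.Ioo 0 1))
        (nhds (∑ j ∈ range n, (n.choose j : ℝ) * 1 ^ j * (eLim j / 2))) :=
      tendsto_finsetSum _ fun j hj =>
        ((hid.pow j).const_mul _).mul (ih j (Finset.mem_range.mp hj))
    have hall := ((hid.mul hsum).const_sub ((0:ℝ) ^ n)).div ((hid.pow (n + 1)).const_add 1)
      (by norm_num)
    have hval : ((0:ℝ) ^ n - 1 * ∑ j ∈ range n, (n.choose j : ℝ) * 1 ^ j * (eLim j / 2))
        / (1 + 1 ^ (n + 1)) = eLim n / 2 := by
      have h := eLim_rec n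
      have h2 : ∑ j ∈ range n, (n.choose j : ℝ) * 1 ^ j * (eLim j / 2)
          = (∑ j ∈ range n, (n.choose j : ℝ) * eLim j) / 2 := by
        rw [Finset.sum_div]
        exact Finset.sum_congr rfl fun j _ => by rw [one_pow]; ring
      rw [h2, one_pow]
      linarith
    rw [hval] at hall
    refine hall.congr' ?_
    filter_upwards [self_mem_nhdsWithin] with q hq
    exact (qS_rec hq.1 hq.2 n).symm

theorem q_euler_tendsto_euler (n : ℕ) :
    Filter.Tendsto (fun q : ℝ => qEuler q n) (nhdsWithin 1 (Set.Ioo 0 1))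
      (nhds ((2 * (1 - 2 ^ (n + 1)) * bernoulli (n + 1) / (n + 1) : ℚ) : ℝ)) := by
  have hid : Tendsto (fun q : ℝ => q) (nhdsWithin 1 (Set.Ioo 0 1)) (nhds 1) :=
    tendsto_nhdsWithin_of_tendsto_nhds tendsto_id
  have h := (hid.const_add 1).mul (qS_tendsto n)
  have e : (1 + 1 : ℝ) * (eLim n / 2)
      = ((2 * (1 - 2 ^ (n + 1)) * bernoulli (n + 1) / (n + 1) : ℚ) : ℝ) := by
    unfold eLim
    push_cast
    ring
  rw [e] at h
  simpa only [qEuler_eq] using h
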